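/- Let H be a Hopf algebra over a commutative ring with antipode S, let g, h ∈ H be grouplike elements, and let x ∈ H be (g,h)-primitive. If n is a natural number such that (g·S(h))^n = 1 and (S(g)·h)^n = 1, then (S∘S)^n (x) = x. -/

import Mathlib

open Coalgebra HopfAlgebra TensorProduct

/-- The antipode of a skew-primitive element. -/
lemma antipode_skew_aux
    (R : Type*) (H : Type*) [CommRing R] [Ring H] [HopfAlgebra R H]
    (g h : H) (hg : IsGroupLikeElem R g) (hh : IsGroupLikeElem R h)
    (x : H) (hx : comul (R := R) x = x ⊗ₜ[R] g + h ⊗ₜ[R] x) :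
    antipode R x = - (antipode R h * x * antipode R g) := by
  have h2 := HopfAlgebra.mul_antipode_rTensor_comul_apply (R := R) x
  have hgg := hg.mul_antipode_cancel
  have h7 := congrArg (TensorProduct.rid R H) (Coalgebra.lTensor_counit_comul (R := R) x)
  have hh2 : counit (R := R) g • x + counit (R := R) x • h = x := by
    simpa [hx] using h7
  rw [hg.counit_eq_one, one_smul] at hh2
  have hxh : counit (R := R) x • h = 0 := by simpa using hh2
  have hxe0 : counit (R := R) x = 0 := by
    simpa [hh.counit_eq_one] using congrArg (counit (R := R)) hxh
  have h9 : antipode R x * g + antipode R h * x = 0 := by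
    simpa [hx, hxe0] using h2
  calc antipode R x = antipode R x * g * antipode R g := by rw [mul_assoc, hgg, mul_one]
    _ = _ := by rw [eq_neg_of_add_eq_zero_left h9, neg_mul]

lemma comul_skew_aux
    (R : Type*) (H : Type*) [CommRing R] [Ring H] [HopfAlgebra R H]
    (g h a b : H) (ha : IsGroupLikeElem R a) (hb : IsGroupLikeElem R b)
    (x : H) (hx : comul (R := R) x = x ⊗ₜ[R] g + h ⊗ₜ[R] x) :
    comul (R := R) (a * x * b) =
      (a * x * b) ⊗ₜ[R] (a * g * b) + (a * h * b) ⊗ₜ[R] (a * x * b) := by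
  rw [Bialgebra.comul_mul, Bialgebra.comul_mul, hx, ha.comul_eq_tmul_self,
    hb.comul_eq_tmul_self]
  simp [mul_add, add_mul]

/-- If `g, h` are grouplike, `x` is `(g,h)`-primitive, and
`(g * S h)^n = 1` and `(S g * h)^n = 1`, then `(S∘S)^n x = x`. -/
theorem antipode_sq_iterate_eq_id_of_skew_primitive
    (R : Type*) (H : Type*) [CommRing R] [Ring H] [HopfAlgebra R H]
    (g h : H) (hg : comul (R := R) g = g ⊗ₜ[R] g) (hg' : counit (R := R) g = 1)
    (hh : comul (R := R) h = h ⊗ₜ[R] h) (hh' : counit (R := R) h = 1)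
    (x : H) (hx : comul (R := R) x = x ⊗ₜ[R] g + h ⊗ₜ[R] x) (n : ℕ)
    (hgh : (g * antipode (R := R) h) ^ n = 1) (hgh' : (antipode (R := R) g * h) ^ n = 1) :
    (⇑(antipode (R := R) (A := H)) ∘ ⇑(antipode (R := R) (A := H)))^[n] x = x := by
  have Hg : IsGroupLikeElem R g := ⟨hg', hg⟩
  have Hh : IsGroupLikeElem R h := ⟨hh', hh⟩
  have g1 := Hg.mul_antipode_cancel
  have g2 := Hg.antipode_mul_cancel
  have h1 := Hh.mul_antipode_cancel
  have h2 := Hh.antipode_mul_cancel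
  have key : ∀ y : H, comul (R := R) y = y ⊗ₜ[R] g + h ⊗ₜ[R] y →
      antipode R (antipode R y) = (g * antipode R h) * y * (antipode R g * h) := by
    intro y hy
    have e := comul_skew_aux R H g h _ _ Hh.antipode Hg.antipode y hy
    rw [mul_assoc _ g, g1, mul_one, h2, one_mul] at e
    rw [antipode_skew_aux R H g h Hg Hh y hy, map_neg,
      antipode_skew_aux R H _ _ Hh.antipode Hg.antipode _ e, Hg.antipode_antipode, Hh.antipode_antipode]
    simp only [neg_neg, mul_assoc]
  have step : ∀ y : H, comul (R := R) y = y ⊗ₜ[R] g + h ⊗ₜ[R] y →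
      comul (R := R) ((g * antipode R h) * y * (antipode R g * h)) =
        ((g * antipode R h) * y * (antipode R g * h)) ⊗ₜ[R] g +
        h ⊗ₜ[R] ((g * antipode R h) * y * (antipode R g * h)) := by
    intro y hy
    have e := comul_skew_aux R H g h _ _ (Hg.mul Hh.antipode) (Hg.antipode.mul Hh) y hy
    have e1 : (g * antipode R h) * g * (antipode R g * h) = g := by
      rw [mul_assoc (g * antipode R h), ← mul_assoc g (antipode R g), g1, one_mul, mul_assoc,
        h2, mul_one]
    have e2 : (g * antipode R h) * h * (antipode R g * h) = h := by
      rw [mul_assoc g, h2, mul_one, ← mul_assoc, g1, one_mul]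
    rw [e1, e2] at e
    exact e
  have main : ∀ (m : ℕ) (y : H), comul (R := R) y = y ⊗ₜ[R] g + h ⊗ₜ[R] y →
      (⇑(antipode (R := R) (A := H)) ∘ ⇑(antipode (R := R) (A := H)))^[m] y =
        (g * antipode R h) ^ m * y * (antipode R g * h) ^ m := by
    intro m
    induction m with
    | zero => intro y _; simp
    | succ k ih =>
      intro y hy
      rw [Function.iterate_succ_apply, Function.comp_apply, key y hy, ih _ (step y hy),
        pow_succ (g * antipode R h), pow_succ' (antipode R g * h)]
      simp only [mul_assoc]
  rw [main n x hx, hgh, hgh', one_mul, mul_one]
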